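/- For every integer r ≥ 1, every integer i, and every integer n ≥ 1, the generalized cluster variables satisfy the three-term recurrence X(i, n+1) = X(i+n, 1) · X(i, n) − X(i, n-1) in ℚ(x_1,…,x_r), where X(i+n,1) = (x_{i+n+1} + x_{i+n-1})/x_{i+n}; consequently, for every n ≥ 1, X(i,n) lies in the ℤ-subalgebra of ℚ(x_1,…,x_r) generated by the elements X(j,1) = (x_{j+1}+x_{j-1})/x_j, 1 ≤ j ≤ r. -/

import Mathlib

/-- The ambient field `ℚ(x_1, …, x_r)`, realized as the fraction field of the
polynomial ring over `ℚ` in variables indexed by `ZMod r` (so indices are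
automatically read modulo `r`). -/
noncomputable abbrev CyclicField (r : ℕ) : Type :=
  FractionRing (MvPolynomial (ZMod r) ℚ)

/-- The variable `x_i` for `i : ℤ`, with `x_{i+r} = x_i`. -/
noncomputable def xv (r : ℕ) (i : ℤ) : CyclicField r :=
  algebraMap (MvPolynomial (ZMod r) ℚ) (CyclicField r) (MvPolynomial.X (i : ZMod r))

/-- The generalized cluster variable `X(l, n)` (the image of the indecomposable
nilpotent representation `E_l[n]` under the Caldero–Chapoton map):
`X(l,0) = 1` and, for `n ≥ 1`,
`X(l,n) = x_{l+n}/x_l + Σ_{k=1}^{n-1} (x_{l+n}·x_{l+r-1})/(x_{l+k-1}·x_{l+k}) + x_{l+r-1}/x_{l+n-1}`. -/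
noncomputable def Xgcv (r : ℕ) (l : ℤ) : ℕ → CyclicField r
  | 0 => 1
  | n + 1 =>
      xv r (l + n + 1) / xv r l
        + ∑ k ∈ Finset.Icc 1 n,
            (xv r (l + n + 1) * xv r (l + r - 1)) / (xv r (l + k - 1) * xv r (l + k))
        + xv r (l + r - 1) / xv r (l + n)

theorem xv_ne_zero (r : ℕ) (i : ℤ) : xv r i ≠ 0 := by
  unfold xv
  intro h
  rw [map_eq_zero_iff _ (IsFractionRing.injective (MvPolynomial (ZMod r) ℚ) (CyclicField r))] at h
  exact MvPolynomial.X_ne_zero _ h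

theorem xv_congr (r : ℕ) {i j : ℤ} (h : (i : ZMod r) = (j : ZMod r)) : xv r i = xv r j := by
  unfold xv
  rw [h]

theorem xv_add_r (r : ℕ) (i : ℤ) : xv r (i + r - 1) = xv r (i - 1) :=
  xv_congr r (by simp)

theorem Xgcv_one (r : ℕ) (i : ℤ) :
    Xgcv r i 1 = (xv r (i + 1) + xv r (i - 1)) / xv r i := by
  simp only [Xgcv]
  rw [xv_add_r]
  simp
  ring

/-- The part of `X(l, n+1)` multiplying `x_{l+n+1}`. -/
noncomputable def coefA (r : ℕ) (l : ℤ) (n : ℕ) : CyclicField r :=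
  1 / xv r l + ∑ k ∈ Finset.Icc 1 n, xv r (l - 1) / (xv r (l + k - 1) * xv r (l + k))

theorem coefA_succ (r : ℕ) (l : ℤ) (n : ℕ) :
    coefA r l (n + 1) = coefA r l n + xv r (l - 1) / (xv r (l + n) * xv r (l + n + 1)) := by
  unfold coefA
  rw [Finset.sum_Icc_succ_top (by omega)]
  have h1 : l + ((n + 1 : ℕ) : ℤ) - 1 = l + n := by push_cast; ring
  have h2 : l + ((n + 1 : ℕ) : ℤ) = l + n + 1 := by push_cast; ring
  rw [h1, h2]
  ring

theorem Xgcv_succ (r : ℕ) (l : ℤ) (n : ℕ) :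
    Xgcv r l (n + 1) = xv r (l + n + 1) * coefA r l n + xv r (l - 1) / xv r (l + n) := by
  simp only [Xgcv, coefA]
  rw [xv_add_r, mul_add, Finset.mul_sum]
  simp only [mul_div_assoc, mul_one_div]

theorem Xgcv_rec (r : ℕ) (i : ℤ) (n : ℕ) :
    Xgcv r i (n + 2) = Xgcv r (i + (n + 1 : ℕ)) 1 * Xgcv r i (n + 1) - Xgcv r i n := by
  have e1 : i + ((n + 1 : ℕ) : ℤ) = i + n + 1 := by push_cast; ring
  have e2 : i + (n : ℤ) + 1 - 1 = i + n := by ring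
  rw [Xgcv_one, Xgcv_succ r i (n + 1), Xgcv_succ r i n, coefA_succ, e1, e2]
  have h0 := xv_ne_zero r (i + n)
  have h1 := xv_ne_zero r (i + n + 1)
  cases n with
  | zero =>
    simp only [Xgcv, coefA]
    simp at h0 h1 ⊢
    field_simp
    ring
  | succ m =>
    rw [Xgcv_succ r i m, coefA_succ]
    have e3 : i + ((m + 1 : ℕ) : ℤ) = i + m + 1 := by push_cast; ring
    rw [e3] at h0 h1 ⊢
    have h2 := xv_ne_zero r (i + m)
    field_simp
    ring

theorem Xgcv_one_mem (r : ℕ) (hr : 1 ≤ r) (i : ℤ) :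
    Xgcv r i 1 ∈
      Algebra.adjoin ℤ {x : CyclicField r | ∃ j : ℤ, 1 ≤ j ∧ j ≤ (r : ℤ) ∧ x = Xgcv r j 1} := by
  apply Algebra.subset_adjoin
  have hr' : (0 : ℤ) < r := by omega
  refine ⟨(i - 1) % r + 1, ?_, ?_, ?_⟩
  · have := Int.emod_nonneg (i - 1) hr'.ne'
    omega
  · have := Int.emod_lt_of_pos (i - 1) hr'
    omega
  · have hc : (((i - 1) % (r : ℤ) : ℤ) : ZMod r) = ((i - 1 : ℤ) : ZMod r) := by
      exact ZMod.intCast_mod _ _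
    rw [Xgcv_one, Xgcv_one]
    congr 1
    · congr 1
      · apply xv_congr
        push_cast at hc ⊢
        rw [hc]; ring
      · apply xv_congr
        push_cast at hc ⊢
        rw [hc]; ring
    · apply xv_congr
      push_cast at hc ⊢
      rw [hc]; ring

theorem Xgcv_mem (r : ℕ) (hr : 1 ≤ r) (i : ℤ) (n : ℕ) :
    Xgcv r i n ∈
      Algebra.adjoin ℤ {x : CyclicField r | ∃ j : ℤ, 1 ≤ j ∧ j ≤ (r : ℤ) ∧ x = Xgcv r j 1} := by
  induction n using Nat.twoStepInduction with
  | zero => exact one_mem _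
  | one => exact Xgcv_one_mem r hr i
  | more n h0 h1 =>
    rw [Xgcv_rec]
    exact sub_mem (mul_mem (Xgcv_one_mem r hr _) h1) h0

/-- the three-term recurrence
`X(i, n+1) = X(i+n, 1) · X(i, n) − X(i, n-1)` holds for all `r ≥ 1`, `i ∈ ℤ`, `n ≥ 1`,
with `X(i+n, 1) = (x_{i+n+1} + x_{i+n-1})/x_{i+n}`; consequently every `X(i, n)`, `n ≥ 1`,
lies in the `ℤ`-subalgebra generated by the `X(j, 1)`, `1 ≤ j ≤ r`. -/
theorem stmt14 (r : ℕ) (hr : 1 ≤ r) (i : ℤ) (n : ℕ) (hn : 1 ≤ n) :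
    Xgcv r i (n + 1) = Xgcv r (i + n) 1 * Xgcv r i n - Xgcv r i (n - 1) ∧
    Xgcv r (i + n) 1 = (xv r (i + n + 1) + xv r (i + n - 1)) / xv r (i + n) ∧
    Xgcv r i n ∈
      Algebra.adjoin ℤ {x : CyclicField r | ∃ j : ℤ, 1 ≤ j ∧ j ≤ (r : ℤ) ∧ x = Xgcv r j 1} := by
  obtain ⟨m, rfl⟩ : ∃ m, n = m + 1 := ⟨n - 1, by omega⟩
  exact ⟨Xgcv_rec r i m, Xgcv_one r _, Xgcv_mem r hr i _⟩
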